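/- arXiv:2403.09123 — 2 statements merged into one kernel-verified Lean document; each statement's English description precedes it below -/
import Mathlib

section
/- Fix β ∈ (0,1), a nonempty B ⊆ {2,…,K}, and values N_a ≥ 0 for a ∈ B̄^c. For every N ≥ (1−β)^{-1}·Σ_{a∈B̄^c} N_a there exists a unique tuple ((N_a ≥ 0 : a ∈ B̄), I_B ≥ 0) such that N_1 = β·N, W_a(N_1, N_a) = I_B for every a ∈ B, and Σ_{a∈[K]} N_a = N. Moreover, denoting the solution by (N_{B̄}(N), I_B(N)), the map N ↦ (N_{B̄}(N), I_B(N)) is continuously differentiable in N. -/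
open scoped BigOperators

/-- A single-parameter exponential family, given by the log-partition function `b`,
smooth with positive second derivative on an open interval `Θ`, together with the
inverse `θof` of `b'` on the set of means `S = b'(Θ)`. -/
structure SPEF where
  Θ : Set ℝ
  Θ_isOpen : IsOpen Θ
  Θ_ordConnected : Set.OrdConnected Θ
  Θ_nonempty : Θ.Nonempty
  b : ℝ → ℝ
  b_smooth : ContDiffOn ℝ (⊤ : ℕ∞) b Θ
  b_conv : ∀ t ∈ Θ, 0 < iteratedDeriv 2 b t
  θof : ℝ → ℝ
  θof_mem : ∀ μ ∈ deriv b '' Θ, θof μ ∈ Θ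
  θof_spec : ∀ μ ∈ deriv b '' Θ, deriv b (θof μ) = μ

namespace SPEF

/-- The set of means of the family. -/
def S (F : SPEF) : Set ℝ := deriv F.b '' F.Θ

/-- KL divergence `d(μ, x)` between the members of the family with means `μ` and `x`. -/
noncomputable def d (F : SPEF) (μ x : ℝ) : ℝ :=
  (F.θof μ - F.θof x) * μ - F.b (F.θof μ) + F.b (F.θof x)

end SPEF

/-- A `K`-armed bandit instance with arm distributions in a fixed SPEF; arm `0`
(the paper's arm `1`) is the unique best arm. -/
structure Bandit (K : ℕ) [NeZero K] extends SPEF where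
  two_le : 2 ≤ K
  μ : Fin K → ℝ
  μ_mem : ∀ a, μ a ∈ SPEF.S toSPEF
  μ_best : ∀ a : Fin K, a ≠ 0 → μ a < μ 0

namespace Bandit

variable {K : ℕ} [NeZero K]

/-- KL divergence of the underlying family. -/
noncomputable def d (M : Bandit K) : ℝ → ℝ → ℝ := M.toSPEF.d

/-- The weighted mean `x_{1,a}(N₁, N_a)`. -/
noncomputable def x1 (M : Bandit K) (a : Fin K) (N1 Na : ℝ) : ℝ :=
  (N1 * M.μ 0 + Na * M.μ a) / (N1 + Na)

/-- The index `W_a(N₁, N_a)` of an arm `a ≠ 1`. -/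
noncomputable def W (M : Bandit K) (a : Fin K) (N1 Na : ℝ) : ℝ :=
  N1 * M.d (M.μ 0) (M.x1 a N1 Na) + Na * M.d (M.μ a) (M.x1 a N1 Na)

/-- The set `{2, …, K}` of suboptimal arms. -/
def alt (K : ℕ) [NeZero K] : Finset (Fin K) := Finset.univ.filter (fun a => a ≠ 0)

/-- The anchor function `g(μ, N)`. -/
noncomputable def g (M : Bandit K) (Nv : Fin K → ℝ) : ℝ :=
  (∑ a ∈ alt K, M.d (M.μ 0) (M.x1 a (Nv 0) (Nv a)) / M.d (M.μ a) (M.x1 a (Nv 0) (Nv a))) - 1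

end Bandit

open Bandit

/-- The defining conditions of the β-fluid allocation at total sample size `N`. -/
def IsBetaFluidSol {K : ℕ} [NeZero K] (M : Bandit K) (β : ℝ) (B : Finset (Fin K))
    (Nout : Fin K → ℝ) (N : ℝ) (Nv : Fin K → ℝ) (IB : ℝ) : Prop :=
  (0 ≤ Nv 0 ∧ ∀ a ∈ B, 0 ≤ Nv a) ∧ (∀ a ∈ alt K \ B, Nv a = Nout a) ∧
    Nv 0 = β * N ∧ (∀ a ∈ B, M.W a (Nv 0) (Nv a) = IB) ∧ 0 ≤ IB ∧ ∑ a, Nv a = N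

/-- A `C¹` function with positive derivative on an open interval is strictly monotone there. -/
theorem strictMonoOn_of_isOpen_deriv_pos {U : Set ℝ} (hU : IsOpen U) (hUc : U.OrdConnected)
    {f : ℝ → ℝ} (hf : ContDiffOn ℝ 1 f U) (hf' : ∀ x ∈ U, 0 < deriv f x) : StrictMonoOn f U :=
  strictMonoOn_of_deriv_pos hUc.convex hf.continuousOn (by rwa [hU.interior_eq])

theorem isOpen_image_of_deriv_pos {U : Set ℝ} (hU : IsOpen U)
    {f : ℝ → ℝ} (hf : ContDiffOn ℝ 1 f U) (hf' : ∀ x ∈ U, 0 < deriv f x) : IsOpen (f '' U) := by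
  rw [isOpen_iff_mem_nhds]
  rintro _ ⟨x, hx, rfl⟩
  have h := ((hf.contDiffAt (hU.mem_nhds hx)).hasStrictDerivAt one_ne_zero).map_nhds_eq
    (hf' x hx).ne'
  rw [← h]
  exact Filter.image_mem_map (hU.mem_nhds hx)

theorem ordConnected_image_of_continuousOn {U : Set ℝ} (hUc : U.OrdConnected)
    {f : ℝ → ℝ} (hf : ContinuousOn f U) : (f '' U).OrdConnected :=
  (hUc.isPreconnected.image f hf).ordConnected

/-- A left inverse of a `C¹` function with positive derivative on an open interval is `C¹`
on the image. -/
theorem contDiffAt_leftInverse {U : Set ℝ} (hU : IsOpen U)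
    {f g : ℝ → ℝ} (hf : ContDiffOn ℝ 1 f U) (hf' : ∀ x ∈ U, 0 < deriv f x)
    (hg : ∀ x ∈ U, g (f x) = x) {x : ℝ} (hx : x ∈ U) : ContDiffAt ℝ 1 g (f x) := by
  have hfx := hf.contDiffAt (hU.mem_nhds hx)
  have hd : HasFDerivAt f
      ((ContinuousLinearEquiv.unitsEquivAut ℝ (Units.mk0 _ (hf' x hx).ne') : ℝ ≃L[ℝ] ℝ) :
        ℝ →L[ℝ] ℝ) x :=
    (hfx.differentiableAt one_ne_zero).hasDerivAt.hasFDerivAt_equiv (hf' x hx).ne'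
  have hinv := hfx.to_localInverse hd one_ne_zero
  refine hinv.congr_of_eventuallyEq ?_
  have hs := hfx.hasStrictFDerivAt' hd one_ne_zero
  have h1 := hs.eventually_right_inverse
  have h2 := hs.localInverse_tendsto
  filter_upwards [h1, h2.eventually (hU.mem_nhds hx)] with y hy1 hy2
  have := hg _ hy2
  rw [hy1] at this
  exact this

theorem deriv_leftInverse_pos {U : Set ℝ} (hU : IsOpen U)
    {f g : ℝ → ℝ} (hf : ContDiffOn ℝ 1 f U) (hf' : ∀ x ∈ U, 0 < deriv f x)
    (hg : ∀ x ∈ U, g (f x) = x) {x : ℝ} (hx : x ∈ U) : 0 < deriv g (f x) := by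
  have hfx := (hf.contDiffAt (hU.mem_nhds hx)).differentiableAt one_ne_zero
  have hgx := (contDiffAt_leftInverse hU hf hf' hg hx).differentiableAt one_ne_zero
  have hcomp := hgx.hasDerivAt.comp x hfx.hasDerivAt
  have hid : HasDerivAt (g ∘ f) 1 x :=
    (hasDerivAt_id x).congr_of_eventuallyEq
      (Filter.eventually_of_mem (hU.mem_nhds hx) fun y hy => hg y hy)
  have h1 := hcomp.unique hid
  have h2 := hf' x hx
  by_contra hneg
  nlinarith

/-- Common-level allocation: given finitely many increasing functions vanishing at `0`, a
prescribed total `s ≥ 0` splits, in a continuously differentiable way, into nonnegative parts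
at which all the functions agree. -/
theorem exists_contDiffOn_common_level {ι : Type*} {B : Finset ι} (hB : B.Nonempty)
    {f : ι → ℝ → ℝ} {U : ι → Set ℝ} (hU : ∀ a ∈ B, IsOpen (U a))
    (hUc : ∀ a ∈ B, (U a).OrdConnected) (hU0 : ∀ a ∈ B, Set.Ici 0 ⊆ U a)
    (hf : ∀ a ∈ B, ContDiffOn ℝ 1 (f a) (U a))
    (hf' : ∀ a ∈ B, ∀ x ∈ U a, 0 < deriv (f a) x) (hf0 : ∀ a ∈ B, f a 0 = 0) :
    ∃ (t : ι → ℝ → ℝ) (J : ℝ → ℝ),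
      (∀ a ∈ B, ContDiffOn ℝ 1 (t a) (Set.Ici 0)) ∧ ContDiffOn ℝ 1 J (Set.Ici 0) ∧
      ∀ s, 0 ≤ s → (∀ a ∈ B, 0 ≤ t a s ∧ f a (t a s) = J s) ∧ ∑ a ∈ B, t a s = s ∧ 0 ≤ J s := by
  have hmono : ∀ a ∈ B, StrictMonoOn (f a) (U a) := fun a ha =>
    strictMonoOn_of_isOpen_deriv_pos (hU a ha) (hUc a ha) (hf a ha) (hf' a ha)
  let g : ι → ℝ → ℝ := fun a => Function.invFunOn (f a) (U a)
  have hg : ∀ a ∈ B, ∀ x ∈ U a, g a (f a x) = x := fun a ha x hx =>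
    (hmono a ha).injOn.leftInvOn_invFunOn hx
  have hgmem : ∀ a ∈ B, ∀ y ∈ f a '' U a, g a y ∈ U a := fun a ha y hy =>
    Function.invFunOn_mem hy
  have hfg : ∀ a ∈ B, ∀ y ∈ f a '' U a, f a (g a y) = y := fun a ha y hy =>
    Function.invFunOn_eq hy
  let V : Set ℝ := ⋂ a ∈ B, f a '' U a
  have hVmem : ∀ {y}, y ∈ V → ∀ a ∈ B, y ∈ f a '' U a := fun hy a ha =>
    Set.mem_iInter₂.1 hy a ha
  have hV : IsOpen V := isOpen_biInter_finset fun a ha =>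
    isOpen_image_of_deriv_pos (hU a ha) (hf a ha) (hf' a ha)
  have hVc : V.OrdConnected := Set.ordConnected_biInter fun a ha =>
    ordConnected_image_of_continuousOn (hUc a ha) (hf a ha).continuousOn
  have hgC : ∀ a ∈ B, ∀ y ∈ f a '' U a, ContDiffAt ℝ 1 (g a) y := by
    rintro a ha _ ⟨x, hx, rfl⟩
    exact contDiffAt_leftInverse (hU a ha) (hf a ha) (hf' a ha) (hg a ha) hx
  have hg' : ∀ a ∈ B, ∀ y ∈ f a '' U a, 0 < deriv (g a) y := by
    rintro a ha _ ⟨x, hx, rfl⟩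
    exact deriv_leftInverse_pos (hU a ha) (hf a ha) (hf' a ha) (hg a ha) hx
  let G : ℝ → ℝ := fun y => ∑ a ∈ B, g a y
  have hG : ContDiffOn ℝ 1 G V := fun y hy =>
    (ContDiffAt.sum fun a ha => hgC a ha y (hVmem hy a ha)).contDiffWithinAt
  have hG' : ∀ y ∈ V, 0 < deriv G y := by
    intro y hy
    have : HasDerivAt G (∑ a ∈ B, deriv (g a) y) y := HasDerivAt.fun_sum fun a ha =>
      ((hgC a ha y (hVmem hy a ha)).differentiableAt one_ne_zero).hasDerivAt
    rw [this.deriv]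
    exact Finset.sum_pos (fun a ha => hg' a ha y (hVmem hy a ha)) hB
  have hGmono := strictMonoOn_of_isOpen_deriv_pos hV hVc hG hG'
  have h0V : (0 : ℝ) ∈ V := Set.mem_iInter₂.2 fun a ha =>
    ⟨0, hU0 a ha Set.self_mem_Ici, hf0 a ha⟩
  have hg0 : ∀ a ∈ B, g a 0 = 0 := fun a ha => by
    have := hg a ha 0 (hU0 a ha Set.self_mem_Ici)
    rwa [hf0 a ha] at this
  have hG0 : G 0 = 0 := Finset.sum_eq_zero hg0
  have hgnonneg : ∀ a ∈ B, ∀ y ∈ f a '' U a, 0 ≤ y → 0 ≤ g a y := by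
    intro a ha y hy h0y
    rw [← (hmono a ha).le_iff_le (hU0 a ha Set.self_mem_Ici) (hgmem a ha y hy), hfg a ha y hy,
      hf0 a ha]
    exact h0y
  have hsurj : Set.Ici 0 ⊆ G '' V := by
    intro s hs
    obtain ⟨c, hc, hmin⟩ := B.exists_min_image (fun a => f a s) hB
    have h0c : 0 ≤ f c s := by
      rw [← hf0 c hc]
      exact (hmono c hc).monotoneOn (hU0 c hc Set.self_mem_Ici) (hU0 c hc hs) hs
    have hcV : f c s ∈ V := Set.mem_iInter₂.2 fun a ha =>
      (ordConnected_image_of_continuousOn (hUc a ha) (hf a ha).continuousOn).out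
        (hVmem h0V a ha) (Set.mem_image_of_mem _ (hU0 a ha hs)) ⟨h0c, hmin a ha⟩
    have hsG : s ≤ G (f c s) := by
      calc s = g c (f c s) := (hg c hc s (hU0 c hc hs)).symm
        _ ≤ G (f c s) := Finset.single_le_sum (f := fun a => g a (f c s))
            (fun a ha => hgnonneg a ha _ (hVmem hcV a ha) h0c) hc
    exact (ordConnected_image_of_continuousOn hVc hG.continuousOn).out
      ⟨0, h0V, hG0⟩ (Set.mem_image_of_mem _ hcV) ⟨hs, hsG⟩
  let J : ℝ → ℝ := Function.invFunOn G V
  have hJG : ∀ y ∈ V, J (G y) = y := fun y hy => hGmono.injOn.leftInvOn_invFunOn hy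
  have hJV : ∀ s, 0 ≤ s → J s ∈ V := fun s hs => Function.invFunOn_mem (hsurj hs)
  have hGJ : ∀ s, 0 ≤ s → G (J s) = s := fun s hs => Function.invFunOn_eq (hsurj hs)
  have hJC : ∀ s, 0 ≤ s → ContDiffAt ℝ 1 J s := by
    intro s hs
    obtain ⟨y, hy, rfl⟩ := hsurj hs
    exact contDiffAt_leftInverse hV hG hG' hJG hy
  refine ⟨fun a => g a ∘ J, J, fun a ha s hs => ?_, fun s hs => (hJC s hs).contDiffWithinAt,
    fun s hs => ?_⟩
  · exact ((hgC a ha _ (hVmem (hJV s hs) a ha)).comp s (hJC s hs)).contDiffWithinAt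
  · have hJ0 : 0 ≤ J s := by
      rw [← hGmono.le_iff_le h0V (hJV s hs), hG0, hGJ s hs]
      exact hs
    have hmem := hVmem (hJV s hs)
    exact ⟨fun a ha => ⟨hgnonneg a ha _ (hmem a ha) hJ0, hfg a ha _ (hmem a ha)⟩,
      hGJ s hs, hJ0⟩

/-- Two nonnegative splittings of the same total at which increasing functions take a common
level coincide. -/
theorem common_level_unique {ι : Type*} {B : Finset ι} (hB : B.Nonempty) {f : ι → ℝ → ℝ}
    (hf : ∀ a ∈ B, StrictMonoOn (f a) (Set.Ici 0)) {t u : ι → ℝ} {I J : ℝ}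
    (ht : ∀ a ∈ B, 0 ≤ t a) (hu : ∀ a ∈ B, 0 ≤ u a) (hI : ∀ a ∈ B, f a (t a) = I)
    (hJ : ∀ a ∈ B, f a (u a) = J) (hsum : ∑ a ∈ B, t a = ∑ a ∈ B, u a) :
    (∀ a ∈ B, t a = u a) ∧ I = J := by
  have key : ∀ a ∈ B, t a = u a := by
    rcases le_total I J with h | h
    · refine (Finset.sum_eq_sum_iff_of_le fun a ha => ?_).1 hsum
      rwa [← (hf a ha).le_iff_le (ht a ha) (hu a ha), hI a ha, hJ a ha]
    · intro a ha
      refine ((Finset.sum_eq_sum_iff_of_le fun a ha => ?_).1 hsum.symm a ha).symm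
      rwa [← (hf a ha).le_iff_le (hu a ha) (ht a ha), hI a ha, hJ a ha]
  obtain ⟨a, ha⟩ := hB
  exact ⟨key, by rw [← hI a ha, ← hJ a ha, key a ha]⟩

namespace SPEF

variable (F : SPEF)

theorem contDiffOn_deriv_b : ContDiffOn ℝ 1 (deriv F.b) F.Θ :=
  F.b_smooth.deriv_of_isOpen F.Θ_isOpen (by norm_cast)

theorem deriv_deriv_b_pos : ∀ t ∈ F.Θ, 0 < deriv (deriv F.b) t := by
  intro t ht
  have := F.b_conv t ht
  rwa [iteratedDeriv_succ, iteratedDeriv_one] at this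

theorem θof_deriv_b : ∀ t ∈ F.Θ, F.θof (deriv F.b t) = t := fun t ht =>
  (strictMonoOn_of_isOpen_deriv_pos F.Θ_isOpen F.Θ_ordConnected F.contDiffOn_deriv_b
    F.deriv_deriv_b_pos).injOn (F.θof_mem _ ⟨t, ht, rfl⟩) ht (F.θof_spec _ ⟨t, ht, rfl⟩)

theorem isOpen_S : IsOpen F.S :=
  isOpen_image_of_deriv_pos F.Θ_isOpen F.contDiffOn_deriv_b F.deriv_deriv_b_pos

theorem ordConnected_S : F.S.OrdConnected :=
  ordConnected_image_of_continuousOn F.Θ_ordConnected F.contDiffOn_deriv_b.continuousOn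

theorem contDiffAt_θof {x : ℝ} (hx : x ∈ F.S) : ContDiffAt ℝ 1 F.θof x := by
  obtain ⟨t, ht, rfl⟩ := hx
  exact contDiffAt_leftInverse F.Θ_isOpen F.contDiffOn_deriv_b F.deriv_deriv_b_pos
    F.θof_deriv_b ht

theorem deriv_θof_pos {x : ℝ} (hx : x ∈ F.S) : 0 < deriv F.θof x := by
  obtain ⟨t, ht, rfl⟩ := hx
  exact deriv_leftInverse_pos F.Θ_isOpen F.contDiffOn_deriv_b F.deriv_deriv_b_pos
    F.θof_deriv_b ht

theorem contDiffAt_b {t : ℝ} (ht : t ∈ F.Θ) : ContDiffAt ℝ 1 F.b t :=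
  (F.b_smooth.contDiffAt (F.Θ_isOpen.mem_nhds ht)).of_le (by norm_cast)

theorem contDiffAt_d (μ : ℝ) {x : ℝ} (hx : x ∈ F.S) : ContDiffAt ℝ 1 (F.d μ) x := by
  have hθ := F.contDiffAt_θof hx
  have hb := (F.contDiffAt_b (F.θof_mem x hx)).comp x hθ
  exact (((contDiffAt_const.sub hθ).mul contDiffAt_const).sub contDiffAt_const).add hb

theorem hasDerivAt_d (μ : ℝ) {x : ℝ} (hx : x ∈ F.S) :
    HasDerivAt (F.d μ) (deriv F.θof x * (x - μ)) x := by
  have hθ := ((F.contDiffAt_θof hx).differentiableAt one_ne_zero).hasDerivAt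
  have hb := ((F.contDiffAt_b (F.θof_mem x hx)).differentiableAt one_ne_zero).hasDerivAt
  rw [F.θof_spec x hx] at hb
  have := (((hθ.const_sub (F.θof μ)).mul_const μ).sub_const (F.b (F.θof μ))).add (hb.comp x hθ)
  exact this.congr_deriv (by ring)

theorem d_self (μ : ℝ) : F.d μ μ = 0 := by simp [d]

theorem d_pos_of_lt {μ x : ℝ} (hμ : μ ∈ F.S) (hx : x ∈ F.S) (h : μ < x) : 0 < F.d μ x := by
  have hsub : Set.Icc μ x ⊆ F.S := F.ordConnected_S.out hμ hx
  have hmono : StrictMonoOn (F.d μ) (Set.Icc μ x) := by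
    refine strictMonoOn_of_deriv_pos (convex_Icc μ x)
      (fun y hy => (F.hasDerivAt_d μ (hsub hy)).continuousAt.continuousWithinAt) fun y hy => ?_
    have hyS := hsub (interior_subset hy)
    rw [interior_Icc] at hy
    rw [(F.hasDerivAt_d μ hyS).deriv]
    exact mul_pos (F.deriv_θof_pos hyS) (sub_pos.2 hy.1)
  have := hmono (Set.left_mem_Icc.2 h.le) (Set.right_mem_Icc.2 h.le) h
  rwa [F.d_self] at this

end SPEF

namespace Bandit

variable {K : ℕ} [NeZero K] (M : Bandit K)

/-- The ratios `t = N_a / N₁` for which the weighted mean lies in the set of means. -/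
def ratioDomain (a : Fin K) : Set ℝ := {t | -1 < t ∧ M.x1 a 1 t ∈ M.toSPEF.S}

theorem W_mul (a : Fin K) (n t : ℝ) : M.W a n (n * t) = n * M.W a 1 t := by
  rcases eq_or_ne n 0 with rfl | hn
  · simp [W]
  · have : M.x1 a n (n * t) = M.x1 a 1 t := by
      rw [x1, x1, ← mul_div_mul_left (1 * M.μ 0 + t * M.μ a) _ hn]
      congr 1 <;> ring
    rw [W, W, this]
    ring

theorem W_one_zero (a : Fin K) : M.W a 1 0 = 0 := by
  simp [W, x1, d, SPEF.d_self]

theorem hasDerivAt_x1 (a : Fin K) {t : ℝ} (ht : -1 < t) :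
    HasDerivAt (M.x1 a 1) (-(M.μ 0 - M.μ a) / (1 + t) ^ 2) t := by
  have h1 : (1 + t) ≠ 0 := by linarith
  have := (((hasDerivAt_id t).mul_const (M.μ a)).const_add (1 * M.μ 0)).div
    ((hasDerivAt_id t).const_add 1) h1
  refine this.congr_deriv ?_
  simp only [id]
  congr 1
  ring

theorem contDiffAt_x1 (a : Fin K) {t : ℝ} (ht : -1 < t) : ContDiffAt ℝ 1 (M.x1 a 1) t :=
  (contDiffAt_const.add (contDiffAt_id.mul contDiffAt_const)).div
    (contDiffAt_const.add contDiffAt_id) (by linarith)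

theorem x1_eq (a : Fin K) {t : ℝ} (ht : -1 < t) :
    M.x1 a 1 t = M.μ a + (M.μ 0 - M.μ a) / (1 + t) := by
  have h1 : (1 + t) ≠ 0 := by linarith
  rw [x1]
  field_simp
  ring

theorem isOpen_ratioDomain (a : Fin K) : IsOpen (M.ratioDomain a) :=
  ContinuousOn.isOpen_inter_preimage (f := M.x1 a 1) (s := Set.Ioi (-1))
    (fun _ ht => (M.contDiffAt_x1 a ht).continuousAt.continuousWithinAt) isOpen_Ioi
    M.toSPEF.isOpen_S

variable {a : Fin K}

theorem x1_antitoneOn (ha : a ≠ 0) : AntitoneOn (M.x1 a 1) (Set.Ioi (-1)) := by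
  intro s hs t ht hst
  have hs' : -1 < s := hs
  rw [M.x1_eq a hs, M.x1_eq a ht]
  have := sub_pos.2 (M.μ_best a ha)
  have : (0 : ℝ) < 1 + s := by linarith
  gcongr

theorem ordConnected_ratioDomain (ha : a ≠ 0) : (M.ratioDomain a).OrdConnected := by
  refine ⟨fun s hs t ht u hu => ?_⟩
  have hu1 : -1 < u := hs.1.trans_le hu.1
  exact ⟨hu1, M.toSPEF.ordConnected_S.out ht.2 hs.2
    ⟨M.x1_antitoneOn ha hu1 ht.1 hu.2, M.x1_antitoneOn ha hs.1 hu1 hu.1⟩⟩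

theorem lt_x1 (ha : a ≠ 0) {t : ℝ} (ht : -1 < t) : M.μ a < M.x1 a 1 t := by
  rw [M.x1_eq a ht]
  have := div_pos (sub_pos.2 (M.μ_best a ha)) (by linarith : 0 < 1 + t)
  linarith

theorem Ici_subset_ratioDomain (ha : a ≠ 0) : Set.Ici 0 ⊆ M.ratioDomain a := by
  intro t ht
  have ht0 : (0 : ℝ) ≤ t := ht
  have ht1 : -1 < t := by linarith
  have h0 : M.x1 a 1 0 = M.μ 0 := by simp [x1]
  refine ⟨ht1, M.toSPEF.ordConnected_S.out (M.μ_mem a) (M.μ_mem 0) ⟨(M.lt_x1 ha ht1).le, ?_⟩⟩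
  rw [← h0]
  exact M.x1_antitoneOn ha (by simp) ht1 ht

theorem contDiffOn_W : ContDiffOn ℝ 1 (M.W a 1) (M.ratioDomain a) := by
  intro t ht
  have hx := M.contDiffAt_x1 a ht.1
  have hd : ∀ μ, ContDiffAt ℝ 1 (fun t => M.d μ (M.x1 a 1 t)) t := fun μ =>
    (M.toSPEF.contDiffAt_d μ ht.2).comp t hx
  exact ((contDiffAt_const.mul (hd _)).add (contDiffAt_id.mul (hd _))).contDiffWithinAt

theorem hasDerivAt_W {t : ℝ} (ht : t ∈ M.ratioDomain a) :
    HasDerivAt (M.W a 1) (M.d (M.μ a) (M.x1 a 1 t)) t := by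
  have hx := M.hasDerivAt_x1 a ht.1
  have hd : ∀ μ, HasDerivAt (fun t => M.d μ (M.x1 a 1 t)) _ t := fun μ =>
    (M.toSPEF.hasDerivAt_d μ ht.2).comp t hx
  have := ((hd (M.μ 0)).const_mul 1).add ((hasDerivAt_id t).mul (hd (M.μ a)))
  refine this.congr_deriv ?_
  have h1 : 1 + t ≠ 0 := by linarith [ht.1]
  have hmean : M.x1 a 1 t - M.μ 0 + t * (M.x1 a 1 t - M.μ a) = 0 := by
    rw [x1]
    field_simp
    ring
  simp only [id]
  linear_combination deriv M.toSPEF.θof (M.x1 a 1 t) *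
    (-(M.μ 0 - M.μ a) / (1 + t) ^ 2) * hmean

theorem deriv_W_pos (ha : a ≠ 0) : ∀ t ∈ M.ratioDomain a, 0 < deriv (M.W a 1) t := by
  intro t ht
  rw [(M.hasDerivAt_W ht).deriv]
  exact M.toSPEF.d_pos_of_lt (M.μ_mem a) ht.2 (M.lt_x1 ha ht.1)

theorem strictMonoOn_W (ha : a ≠ 0) : StrictMonoOn (M.W a 1) (Set.Ici 0) :=
  (strictMonoOn_of_isOpen_deriv_pos (M.isOpen_ratioDomain a) (M.ordConnected_ratioDomain ha)
    M.contDiffOn_W (M.deriv_W_pos ha)).mono (M.Ici_subset_ratioDomain ha)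

end Bandit

theorem sum_univ_eq_zero_add_alt {K : ℕ} [NeZero K] {B : Finset (Fin K)} (hB : B ⊆ alt K)
    (v : Fin K → ℝ) : ∑ a, v a = v 0 + (∑ a ∈ B, v a + ∑ a ∈ alt K \ B, v a) := by
  rw [add_comm (∑ a ∈ B, v a), Finset.sum_sdiff hB, alt, Finset.filter_ne',
    Finset.add_sum_erase _ _ (Finset.mem_univ 0)]

/-- Proposition B.9, β-EB-TCB fluid allocation: existence, uniqueness
and continuous differentiability in `N` of the β-fluid allocation. -/
theorem statement_16 {K : ℕ} [NeZero K] (M : Bandit K)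
    (β : ℝ) (hβ : β ∈ Set.Ioo (0 : ℝ) 1)
    (B : Finset (Fin K)) (hBne : B.Nonempty) (hBsub : B ⊆ alt K)
    (Nout : Fin K → ℝ) (hNout : ∀ a ∈ alt K \ B, 0 ≤ Nout a) :
    ∃ (Nfun : ℝ → Fin K → ℝ) (Ifun : ℝ → ℝ),
      (∀ N : ℝ, (1 - β)⁻¹ * ∑ a ∈ alt K \ B, Nout a ≤ N →
        IsBetaFluidSol M β B Nout N (Nfun N) (Ifun N) ∧
        ∀ (Nv : Fin K → ℝ) (IB : ℝ),
          IsBetaFluidSol M β B Nout N Nv IB → Nv = Nfun N ∧ IB = Ifun N) ∧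
      ContDiffOn ℝ 1 Nfun (Set.Ici ((1 - β)⁻¹ * ∑ a ∈ alt K \ B, Nout a)) ∧
      ContDiffOn ℝ 1 Ifun (Set.Ici ((1 - β)⁻¹ * ∑ a ∈ alt K \ B, Nout a)) := by
  obtain ⟨hβ0, hβ1⟩ := hβ
  have hB0 : ∀ a ∈ B, a ≠ 0 := fun a ha => (Finset.mem_filter.1 (hBsub ha)).2
  obtain ⟨t, J, htC, hJC, hsol⟩ := exists_contDiffOn_common_level hBne
    (f := fun a => M.W a 1) (U := M.ratioDomain) (fun a _ => M.isOpen_ratioDomain a)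
    (fun a ha => M.ordConnected_ratioDomain (hB0 a ha))
    (fun a ha => M.Ici_subset_ratioDomain (hB0 a ha)) (fun a _ => M.contDiffOn_W)
    (fun a ha => M.deriv_W_pos (hB0 a ha)) (fun a _ => M.W_one_zero a)
  set C : ℝ := ∑ a ∈ alt K \ B, Nout a with hC
  have hC0 : 0 ≤ C := Finset.sum_nonneg hNout
  have h1β : 0 < 1 - β := by linarith
  have hle : ∀ {N : ℝ}, (1 - β)⁻¹ * C ≤ N → C ≤ (1 - β) * N := fun h => by
    rwa [inv_mul_le_iff₀ h1β] at h
  have hN0 : ∀ {N : ℝ}, (1 - β)⁻¹ * C ≤ N → 0 ≤ N := fun h =>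
    (mul_nonneg (inv_nonneg.2 h1β.le) hC0).trans h
  let s : ℝ → ℝ := fun N => ((1 - β) * N - C) / (β * N)
  have hs0 : ∀ {N : ℝ}, (1 - β)⁻¹ * C ≤ N → 0 ≤ s N := fun h =>
    div_nonneg (sub_nonneg.2 (hle h)) (mul_nonneg hβ0.le (hN0 h))
  have hs : ∀ {N : ℝ}, (1 - β)⁻¹ * C ≤ N → β * N * s N = (1 - β) * N - C := by
    intro N h
    rcases eq_or_ne N 0 with rfl | hN
    · have := hle h
      simp only [mul_zero, zero_mul] at this ⊢
      linarith
    · exact mul_div_cancel₀ _ (mul_ne_zero hβ0.ne' hN)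
  have hsmooth : ∀ φ : ℝ → ℝ, ContDiffOn ℝ 1 φ (Set.Ici 0) →
      ContDiffOn ℝ 1 (fun N => β * N * φ (s N)) (Set.Ici ((1 - β)⁻¹ * C)) := by
    intro φ hφ
    rcases hC0.eq_or_lt with h | h
    · have : (fun N => β * N * φ (s N)) = fun N => β * N * φ ((1 - β) / β) := by
        funext N
        rcases eq_or_ne N 0 with rfl | hN
        · simp
        · simp only [s, ← h, sub_zero, mul_div_mul_right _ _ hN]
      rw [this]
      exact ((contDiff_const.mul contDiff_id).mul contDiff_const).contDiffOn
    · have hpos : ∀ N ∈ Set.Ici ((1 - β)⁻¹ * C), β * N ≠ 0 := fun N hN =>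
        (mul_pos hβ0 ((mul_pos (inv_pos.2 h1β) h).trans_le hN)).ne'
      have hsC : ContDiffOn ℝ 1 s (Set.Ici ((1 - β)⁻¹ * C)) :=
        ((contDiffOn_const.mul contDiffOn_id).sub contDiffOn_const).div
          (contDiffOn_const.mul contDiffOn_id) hpos
      exact (contDiffOn_const.mul contDiffOn_id).mul (hφ.comp hsC fun N hN => hs0 hN)
  let Nfun : ℝ → Fin K → ℝ := fun N a =>
    if a = 0 then β * N else if a ∈ B then β * N * t a (s N) else Nout a
  have hfun0 : ∀ N, Nfun N 0 = β * N := fun N => if_pos rfl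
  have hfunB : ∀ N, ∀ a ∈ B, Nfun N a = β * N * t a (s N) := fun N a ha => by
    simp only [Nfun, if_neg (hB0 a ha), if_pos ha]
  have hfunout : ∀ N, ∀ a ∈ alt K \ B, Nfun N a = Nout a := fun N a ha => by
    obtain ⟨ha1, ha2⟩ := Finset.mem_sdiff.1 ha
    simp only [Nfun, if_neg (Finset.mem_filter.1 ha1).2, if_neg ha2]
  refine ⟨Nfun, fun N => β * N * J (s N), fun N hN => ⟨?_, ?_⟩, ?_, hsmooth J hJC⟩
  · have hβN : 0 ≤ β * N := mul_nonneg hβ0.le (hN0 hN)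
    obtain ⟨hlevel, hsum, hJ0⟩ := hsol _ (hs0 hN)
    refine ⟨⟨(hfun0 N).symm ▸ hβN, fun a ha => ?_⟩, hfunout N, hfun0 N, fun a ha => ?_,
      mul_nonneg hβN hJ0, ?_⟩
    · rw [hfunB N a ha]
      exact mul_nonneg hβN (hlevel a ha).1
    · rw [hfun0, hfunB N a ha, M.W_mul]
      exact congrArg _ (hlevel a ha).2
    · rw [sum_univ_eq_zero_add_alt hBsub, hfun0, Finset.sum_congr rfl (hfunB N),
        Finset.sum_congr rfl (hfunout N), ← Finset.mul_sum, hsum, hs hN, ← hC]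
      ring
  · rintro Nv IB ⟨⟨-, hNvB⟩, hNvout, hNv0, hW, -, hNvsum⟩
    rw [sum_univ_eq_zero_add_alt hBsub, hNv0, Finset.sum_congr rfl hNvout, ← hC] at hNvsum
    have hsumB : ∑ a ∈ B, Nv a = (1 - β) * N - C := by linarith
    obtain ⟨hlevel, hsum, -⟩ := hsol _ (hs0 hN)
    have key : (∀ a ∈ B, Nv a = β * N * t a (s N)) ∧ IB = β * N * J (s N) := by
      rcases (hN0 hN).eq_or_lt with rfl | hNpos
      · have hz : ∀ a ∈ B, Nv a = 0 :=
          (Finset.sum_eq_zero_iff_of_nonneg hNvB).1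
            (le_antisymm (by linarith) (Finset.sum_nonneg hNvB))
        refine ⟨fun a ha => by simp [hz a ha], ?_⟩
        obtain ⟨a, ha⟩ := hBne
        rw [← hW a ha, hNv0, hz a ha]
        simp [W]
      · have hβN : 0 < β * N := mul_pos hβ0 hNpos
        have hscale : ∀ a, Nv a = β * N * (Nv a / (β * N)) := fun a =>
          (mul_div_cancel₀ _ hβN.ne').symm
        obtain ⟨h1, h2⟩ := common_level_unique hBne
          (fun a ha => M.strictMonoOn_W (hB0 a ha))
          (t := fun a => Nv a / (β * N)) (u := fun a => t a (s N))
          (I := IB / (β * N)) (J := J (s N))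
          (fun a ha => div_nonneg (hNvB a ha) hβN.le) (fun a ha => (hlevel a ha).1)
          (fun a ha => by
            have := hW a ha
            rw [hNv0, hscale a, M.W_mul] at this
            rw [← this, mul_div_cancel_left₀ _ hβN.ne'])
          (fun a ha => (hlevel a ha).2)
          (by rw [hsum, ← Finset.sum_div, hsumB])
        exact ⟨fun a ha => by rw [hscale a, h1 a ha], by
          rw [← h2, mul_div_cancel₀ _ hβN.ne']⟩
    refine ⟨funext fun a => ?_, key.2⟩
    by_cases ha0 : a = 0
    · rw [ha0, hNv0, hfun0]
    · by_cases ha : a ∈ B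
      · rw [key.1 a ha, hfunB N a ha]
      · have hout : a ∈ alt K \ B :=
          Finset.mem_sdiff.2 ⟨Finset.mem_filter.2 ⟨Finset.mem_univ a, ha0⟩, ha⟩
        rw [hNvout a hout, hfunout N a hout]
  · refine contDiffOn_pi.2 fun a => ?_
    by_cases ha0 : a = 0
    · subst ha0
      simp only [hfun0]
      exact contDiffOn_const.mul contDiffOn_id
    · by_cases ha : a ∈ B
      · simp only [hfunB _ a ha]
        exact hsmooth (t a) (htC a ha)
      · simp only [Nfun, if_neg ha0, if_neg ha]
        exact contDiffOn_const
end

section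
/- Under the exploration rule, the following hold: (1) every epoch of exploration has length at most (2K)^{1/(1−α)}; (2) there exists a constant C > 0, depending only on K and α, such that min_{a∈[K]} Ñ_a(N) ≥ N^α − C for every N ≥ 1 (so every arm receives Ω(N^α) pulls). -/
/-- Number of pulls of arm `a` in the first `N` iterations (iterations are numbered
starting from `1`). -/
def pulls {K : ℕ} (A : ℕ → Fin K) (a : Fin K) (N : ℕ) : ℕ :=
  ((Finset.Icc 1 N).filter fun n => A n = a).card

/-- Iteration `N ≥ 1` is an exploration if the least-sampled arm has fewer than `N^α`
pulls, i.e. `min_a Ñ_a(N−1) < N^α`. -/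
def isExplo {K : ℕ} (α : ℝ) (A : ℕ → Fin K) (N : ℕ) : Prop :=
  1 ≤ N ∧ ∃ a : Fin K, (pulls A a (N - 1) : ℝ) < (N : ℝ) ^ α

/-- The exploration rule: at every exploration iteration, a least-sampled arm is pulled. -/
def ExploRule {K : ℕ} (α : ℝ) (A : ℕ → Fin K) : Prop :=
  ∀ N : ℕ, isExplo α A N → ∀ b : Fin K, pulls A (A N) (N - 1) ≤ pulls A b (N - 1)

lemma pulls_mono {K : ℕ} (A : ℕ → Fin K) (a : Fin K) : Monotone (pulls A a) := fun _ _ h =>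
  Finset.card_le_card (Finset.filter_subset_filter _ (Finset.Icc_subset_Icc_right h))

lemma pulls_succ_self {K : ℕ} (A : ℕ → Fin K) (n : ℕ) :
    pulls A (A (n + 1)) (n + 1) = pulls A (A (n + 1)) n + 1 := by
  unfold pulls
  rw [← Finset.insert_Icc_right_eq_Icc_add_one (by omega), Finset.filter_insert, if_pos rfl,
    Finset.card_insert_of_notMem (by simp)]

/-- Each exploration removes one arm from the set of arms with at most `c` pulls, as long as
all arms have at least `c` pulls. -/
lemma card_pulls_le_of_isExplo {K : ℕ} {α : ℝ} {A : ℕ → Fin K} (hA : ExploRule α A) {M c : ℕ}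
    (hc : ∀ a, c ≤ pulls A a M) {i : ℕ} (hE : ∀ n ∈ Finset.Icc (M + 1) (M + i), isExplo α A n) :
    (Finset.univ.filter fun a => pulls A a (M + i) ≤ c).card ≤ K - i := by
  induction i with
  | zero => exact (Finset.card_filter_le _ _).trans (by simp)
  | succ i ih =>
    have ih := ih fun n hn => hE n (by simp only [Finset.mem_Icc] at hn ⊢; omega)
    have hmin := hA (M + i + 1) (hE _ (by simp only [Finset.mem_Icc]; omega))
    have hlt : c < pulls A (A (M + i + 1)) (M + i + 1) := by
      rw [pulls_succ_self]
      exact Nat.lt_succ_of_le ((hc _).trans (pulls_mono A _ (by omega)))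
    have hsub : (Finset.univ.filter fun a => pulls A a (M + (i + 1)) ≤ c) ⊆
        (Finset.univ.filter fun a => pulls A a (M + i) ≤ c).erase (A (M + i + 1)) := by
      intro a ha
      simp only [Finset.mem_filter, Finset.mem_univ, true_and, Finset.mem_erase] at ha ⊢
      refine ⟨?_, (pulls_mono A a (by omega)).trans ha⟩
      rintro rfl
      exact absurd ha (not_le.2 hlt)
    have hcard := Finset.card_le_card hsub
    rcases (Finset.univ.filter fun a => pulls A a (M + i) ≤ c).eq_empty_or_nonempty with h | ⟨b, hb⟩
    · simp only [h, Finset.erase_empty, Finset.card_empty] at hcard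
      omega
    · have hmem : A (M + i + 1) ∈ Finset.univ.filter fun a => pulls A a (M + i) ≤ c := by
        simp only [Finset.mem_filter, Finset.mem_univ, true_and] at hb ⊢
        exact (hmin b).trans hb
      rw [Finset.card_erase_of_mem hmem] at hcard
      omega

lemma add_le_pulls_of_isExplo {K : ℕ} {α : ℝ} {A : ℕ → Fin K} (hA : ExploRule α A) {M c : ℕ}
    (hc : ∀ a, c ≤ pulls A a M) {j : ℕ}
    (hE : ∀ n ∈ Finset.Icc (M + 1) (M + K * j), isExplo α A n) (a : Fin K) :
    c + j ≤ pulls A a (M + K * j) := by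
  induction j generalizing a with
  | zero => simpa using hc a
  | succ j ih =>
    have ih := ih fun n hn => hE n (by
      simp only [Finset.mem_Icc, Nat.mul_succ] at hn ⊢; omega)
    have h := card_pulls_le_of_isExplo hA ih (i := K) fun n hn => hE n (by
      simp only [Finset.mem_Icc, Nat.mul_succ] at hn ⊢; omega)
    rw [Nat.sub_self, Nat.le_zero, Finset.card_eq_zero, Finset.filter_eq_empty_iff] at h
    have := h (Finset.mem_univ a)
    rw [Nat.mul_succ, ← Nat.add_assoc M]
    omega

/-- A run of explorations starting when all arms have at least `M ^ α` pulls is short. -/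
lemma length_le_of_isExplo {K : ℕ} (hK : 1 ≤ K) {α : ℝ} (hα : α ∈ Set.Ioo (0 : ℝ) 1)
    {A : ℕ → Fin K} (hA : ExploRule α A) {M L : ℕ}
    (hM : ∀ a, (M : ℝ) ^ α ≤ pulls A a M)
    (hE : ∀ n ∈ Finset.Icc (M + 1) (M + L), isExplo α A n) :
    (L : ℝ) ≤ (2 * K : ℝ) ^ (1 / (1 - α)) := by
  obtain ⟨hα0, hα1⟩ := hα
  by_contra! hL
  have hB : (0 : ℝ) ≤ (2 * K : ℝ) ^ (1 / (1 - α)) := by positivity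
  have hL0 : (0 : ℝ) < L := hB.trans_lt hL
  have hL1 : 1 ≤ L := by exact_mod_cast hL0
  have hpow : (2 * K : ℝ) < (L : ℝ) ^ (1 - α) := by
    have h := Real.rpow_lt_rpow hB hL (sub_pos.2 hα1)
    rwa [← Real.rpow_mul (by positivity), one_div_mul_cancel (sub_pos.2 hα1).ne',
      Real.rpow_one] at h
  have hLα : (1 : ℝ) ≤ (L : ℝ) ^ α := Real.one_le_rpow (by exact_mod_cast hL1) hα0.le
  have hmul : (2 * K : ℝ) * (L : ℝ) ^ α < L := by
    calc (2 * K : ℝ) * (L : ℝ) ^ α < (L : ℝ) ^ (1 - α) * (L : ℝ) ^ α := by gcongr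
      _ = L := by rw [← Real.rpow_add hL0, sub_add_cancel, Real.rpow_one]
  set j := (L - 1) / K with hj
  have hjle : K * j ≤ L - 1 := Nat.mul_div_le _ _
  have hjlt : L - 1 < K * (j + 1) := Nat.lt_mul_div_succ _ hK
  obtain ⟨-, a, ha⟩ := hE (M + L) (by simp only [Finset.mem_Icc]; omega)
  have hpulls : ⌈(M : ℝ) ^ α⌉₊ + j ≤ pulls A a (M + L - 1) :=
    (add_le_pulls_of_isExplo hA (fun b => Nat.ceil_le.2 (hM b))
      (fun n hn => hE n (by simp only [Finset.mem_Icc] at hn ⊢; omega)) a).trans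
      (pulls_mono A a (by omega))
  have hpulls' : (⌈(M : ℝ) ^ α⌉₊ : ℝ) + j ≤ pulls A a (M + L - 1) := by exact_mod_cast hpulls
  have hsub : ((M + L : ℕ) : ℝ) ^ α ≤ (M : ℝ) ^ α + (L : ℝ) ^ α := by
    push_cast
    exact Real.rpow_add_le_add_rpow (by positivity) (by positivity) hα0.le hα1.le
  have hjL : (j : ℝ) < (L : ℝ) ^ α := by linarith [Nat.le_ceil ((M : ℝ) ^ α)]
  have hK0 : (0 : ℝ) < K := by exact_mod_cast hK
  have hj2 : 2 * K * j < L := by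
    have : (2 * K * j : ℝ) < L := lt_trans (by gcongr) hmul
    exact_mod_cast this
  have hK2 : 2 * K < L := by
    have : (2 * K : ℝ) < L := lt_of_le_of_lt (le_mul_of_one_le_right (by positivity) hLα) hmul
    exact_mod_cast this
  rcases Nat.eq_zero_or_pos j with h | h
  · rw [h] at hjlt
    omega
  · have : L ≤ K * (j + 1) := by omega
    nlinarith

/-- Before an epoch of exploration starts, all arms are sampled enough. -/
lemma rpow_le_pulls_of_not_isExplo {K : ℕ} {α : ℝ} (hα : 0 < α) {A : ℕ → Fin K} {M : ℕ}
    (h : M = 0 ∨ ¬ isExplo α A M) (a : Fin K) : (M : ℝ) ^ α ≤ pulls A a M := by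
  rcases Nat.eq_zero_or_pos M with rfl | hM
  · simp [Real.zero_rpow hα.ne']
  · have h := h.resolve_left hM.ne'
    simp only [isExplo, not_and, not_exists, not_lt] at h
    exact (h hM a).trans (by exact_mod_cast pulls_mono A a (Nat.sub_le M 1))

lemma exists_epoch_start {K : ℕ} (α : ℝ) (A : ℕ → Fin K) (N : ℕ) :
    ∃ M ≤ N, (M = 0 ∨ ¬ isExplo α A M) ∧ ∀ n ∈ Finset.Icc (M + 1) N, isExplo α A n := by
  induction N with
  | zero => exact ⟨0, le_rfl, Or.inl rfl, by simp⟩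
  | succ N ih =>
    by_cases h : isExplo α A (N + 1)
    · obtain ⟨M, hMN, hM, hE⟩ := ih
      refine ⟨M, by omega, hM, fun n hn => ?_⟩
      rcases (Finset.mem_Icc.1 hn).2.eq_or_lt with rfl | hlt
      · exact h
      · exact hE n (Finset.mem_Icc.2 ⟨(Finset.mem_Icc.1 hn).1, by omega⟩)
    · exact ⟨N + 1, le_rfl, Or.inr h, by simp⟩

/-- Proposition C.1 (1)–(2): every epoch of exploration has length at
most `(2K)^{1/(1−α)}`, and there is a constant `C > 0` depending only on `K` and `α` such
that every arm has at least `N^α − C` pulls after `N` iterations. -/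
theorem statement_18 (K : ℕ) (hK : 2 ≤ K) (α : ℝ) (hα : α ∈ Set.Ioo (0 : ℝ) 1) :
    (∀ A : ℕ → Fin K, ExploRule α A →
      ∀ N₁ N₂ : ℕ, 1 ≤ N₁ → N₁ ≤ N₂ →
        (∀ n ∈ Finset.Icc N₁ N₂, isExplo α A n) →
        (N₁ = 1 ∨ ¬ isExplo α A (N₁ - 1)) →
        (N₂ : ℝ) - N₁ + 1 ≤ (2 * K : ℝ) ^ (1 / (1 - α))) ∧
    ∃ C : ℝ, 0 < C ∧
      ∀ A : ℕ → Fin K, ExploRule α A →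
        ∀ N : ℕ, 1 ≤ N → ∀ a : Fin K, (N : ℝ) ^ α - C ≤ (pulls A a N : ℝ) := by
  refine ⟨fun A hA N₁ N₂ h1 h12 hE hstart => ?_, ?_⟩
  · obtain ⟨M, rfl⟩ := Nat.exists_eq_add_of_le' h1
    obtain ⟨L, rfl⟩ := Nat.exists_eq_add_of_le (show M ≤ N₂ by omega)
    have h := length_le_of_isExplo (by omega) hα hA
      (rpow_le_pulls_of_not_isExplo hα.1 (by simpa using hstart)) hE
    push_cast
    linarith
  · have hK0 : (0 : ℝ) < K := by exact_mod_cast (by omega : 0 < K)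
    refine ⟨((2 * K : ℝ) ^ (1 / (1 - α))) ^ α, by positivity, fun A hA N _ a => ?_⟩
    obtain ⟨M, hMN, hM, hE⟩ := exists_epoch_start α A N
    obtain ⟨L, rfl⟩ := Nat.exists_eq_add_of_le hMN
    have hM := rpow_le_pulls_of_not_isExplo hα.1 hM
    have hL := Real.rpow_le_rpow (by positivity) (length_le_of_isExplo (by omega) hα hA hM hE)
      hα.1.le
    have hsub : ((M + L : ℕ) : ℝ) ^ α ≤ (M : ℝ) ^ α + (L : ℝ) ^ α := by
      push_cast
      exact Real.rpow_add_le_add_rpow (by positivity) (by positivity) hα.1.le hα.2.le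
    have hmono : (pulls A a M : ℝ) ≤ pulls A a (M + L) := by
      exact_mod_cast pulls_mono A a hMN
    linarith [hM a]
end
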